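/- Let s be an even positive integer and n an odd integer with n > 3s, and let F(X) = X^n + X^(n-s) + X^(n-2s) + X^(n-3s) + 1 ∈ ℤ[X] with roots α_1, ..., α_n ∈ ℂ counted with multiplicity. Then the discriminant D(F) := ∏_{1 ≤ i < j ≤ n} (α_i − α_j)^2 is an integer satisfying D(F) ≡ (−1)^(n(n−1)/2) · n (mod 8); explicitly, D(F) ≡ 1 (mod 8) if n ≡ ±1 (mod 8), and D(F) ≡ 5 (mod 8) if n ≡ ±3 (mod 8). -/

import Mathlib

open Polynomial Finset

/-!
Put `n = a + 3s` and let `α` run over the roots of `F`. Up to sign the discriminant is `∏ F'(α)`,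
and `α F'(α) = -(n + s B(α))` with `B = X^(a + 2s) + 2 X^(a + s) + 3 X^a`, so that
`∏ F'(α) = ∏ (n + s B(α))` because `∏ α = -1`. Apart from the constant term only odd exponents occur
in `F`, hence by Newton's identities the power sums of the roots of odd index less than `n` vanish;
then `∑ α^(2k) = (∑ α^k)² - 2 e₂(α^k)` is even for `0 < k < n`. This gives `∑ B(α) = 0` and
`4 ∣ ∑ B(α)²`, and as `s` is even, expanding the product yields `∏ (n + s B(α)) ≡ n ^ n ≡ n` modulo
`8`. The divisibilities live in a finite free extension of `ℤ` in which `F` splits, and descend to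
`ℤ` by faithful flatness.
-/

section Discriminant

variable {R ι : Type*} [CommRing R] [Fintype ι]

lemma eval_derivative_prod_X_sub_C [DecidableEq ι] (α : ι → R) (i : ι) :
    (derivative (∏ j, (X - C (α j)))).eval (α i) = ∏ j ∈ {i}ᶜ, (α i - α j) := by
  rw [derivative_prod_finset, eval_finsetSum, sum_eq_single i]
  · simp [eval_prod, compl_singleton]
  · intro j _ hji
    rw [eval_mul, eval_prod, prod_eq_zero (mem_erase.mpr ⟨hji.symm, mem_univ i⟩) (by simp),
      zero_mul]
  · simp

lemma prod_prod_Ioi_sub_sq {n : ℕ} (α : Fin n → R) :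
    ∏ i, ∏ j ∈ Ioi i, (α i - α j) ^ 2 =
      (-1) ^ (n * (n - 1) / 2) * ∏ i, (derivative (∏ j, (X - C (α j)))).eval (α i) := by
  have sum_card_Ioi : ∑ i : Fin n, #(Ioi i) = n * (n - 1) / 2 := by
    simp only [Fin.card_Ioi]
    rw [Fin.sum_univ_eq_sum_range (fun i ↦ n - 1 - i), sum_range_reflect (fun i ↦ i), sum_range_id]
  simp only [eval_derivative_prod_X_sub_C]
  rw [← prod_prod_Ioi_mul_eq_prod_prod_off_diag (fun i j ↦ α j - α i), ← sum_card_Ioi,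
    ← prod_pow_eq_pow_sum, ← prod_mul_distrib]
  refine prod_congr rfl fun i _ ↦ ?_
  rw [← prod_const, ← prod_mul_distrib]
  exact prod_congr rfl fun j _ ↦ by ring

lemma discr_eq_neg_one_pow_mul_resultant {f : R[X]} (hf : f.Monic) :
    f.discr = (-1) ^ (f.natDegree * (f.natDegree - 1) / 2) *
      resultant f (derivative f) f.natDegree (f.natDegree - 1) := by
  rcases f.natDegree.eq_zero_or_pos with hdeg | hdeg
  · simpa [hf.natDegree_eq_zero.mp hdeg] using discr_C (1 : R)
  rw [resultant_deriv (natDegree_pos_iff_degree_pos.mp hdeg), hf.leadingCoeff, mul_one, ← mul_assoc,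
    ← mul_pow, neg_one_mul, neg_neg, one_pow, one_mul]

lemma discr_map_of_monic {S : Type*} [CommRing S] {f : R[X]} (hf : f.Monic) (φ : R →+* S) :
    (f.map φ).discr = φ f.discr := by
  nontriviality S
  rw [discr_eq_neg_one_pow_mul_resultant (hf.map φ), hf.natDegree_map, derivative_map,
    resultant_map_map, discr_eq_neg_one_pow_mul_resultant hf]
  simp

lemma discr_prod_X_sub_C (α : ι → R) :
    (∏ i, (X - C (α i))).discr = (-1) ^ (Fintype.card ι * (Fintype.card ι - 1) / 2) *
      ∏ i, (derivative (∏ j, (X - C (α j)))).eval (α i) := by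
  nontriviality R
  have hdeg : (∏ i, (X - C (α i))).natDegree = Fintype.card ι :=
    natDegree_finsetProd_X_sub_C_eq_card univ α
  have hderiv := (natDegree_derivative_le (∏ i, (X - C (α i)))).trans_eq (by rw [hdeg])
  rw [discr_eq_neg_one_pow_mul_resultant (monic_prod_X_sub_C α univ),
    resultant_prod_left _ _ _ _ (by simp) (by rw [hdeg]; exact hderiv)]
  simp [hdeg, hderiv]

end Discriminant

section SplittingExtension

lemma exists_free_map_eq_prod_X_sub_C.{u} {R : Type u} [CommRing R] [Nontrivial R] {f : R[X]}
    (hf : f.Monic) :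
    ∃ (S : Type u) (_ : CommRing S) (_ : Algebra R S) (_ : Module.Free R S) (_ : Nontrivial S)
      (ι : Type u) (_ : Fintype ι) (α : ι → S),
      f.map (algebraMap R S) = ∏ i, (X - C (α i)) := by
  classical
  obtain ⟨S, _, _, _, _, _, hsplits⟩ := hf.exists_splits_map
  obtain ⟨m, hm⟩ := splits_iff_exists_multiset.mp hsplits
  refine ⟨S, _, _, ‹_›, ‹_›, m, inferInstance, (↑), ?_⟩
  rw [hm, (hf.map _).leadingCoeff, C_1, one_mul, prod_eq_multiset_prod,
    Multiset.map_univ m fun x ↦ X - C x]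

lemma dvd_of_algebraMap_dvd_algebraMap {R S : Type*} [CommRing R] [CommRing S]
    [Algebra R S] [Module.FaithfullyFlat R S] {a b : R} (h : algebraMap R S a ∣ algebraMap R S b) :
    a ∣ b := by
  rw [← Ideal.mem_span_singleton,
    ← Ideal.comap_map_eq_self_of_faithfullyFlat (B := S) (Ideal.span {a})]
  simpa only [Ideal.map_span, Set.image_singleton, Ideal.mem_comap, Ideal.mem_span_singleton]
    using h

end SplittingExtension

section PowerSums

variable {R ι : Type*} [CommRing R] [Fintype ι] (α : ι → R)

lemma sum_pow_eq_mul_esymm_sub_sum {k : ℕ} (hk : 0 < k) :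
    ∑ i, α i ^ k = (-1) ^ (k + 1) * k * (univ.val.map α).esymm k -
      ∑ p ∈ antidiagonal k with p.1 ∈ Set.Ioo 0 k,
        (-1) ^ p.1 * (univ.val.map α).esymm p.1 * ∑ i, α i ^ p.2 := by
  simpa [MvPolynomial.psum, MvPolynomial.aeval_esymm_eq_multiset_esymm] using
    congrArg (MvPolynomial.aeval α) (MvPolynomial.psum_eq_mul_esymm_sub_sum ι ℤ k hk)

lemma esymm_one_map : (univ.val.map α).esymm 1 = ∑ i, α i := by
  simp [esymm_map_val, powersetCard_one]

lemma two_mul_esymm_two :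
    2 * (univ.val.map α).esymm 2 = (∑ i, α i) ^ 2 - ∑ i, α i ^ 2 := by
  have pairs : {p ∈ antidiagonal 2 | p.1 ∈ Set.Ioo 0 2} = {(1, 1)} := by decide
  have newton := sum_pow_eq_mul_esymm_sub_sum α two_pos
  simp only [pairs, sum_singleton, esymm_one_map, pow_one] at newton
  push_cast at newton
  linear_combination newton

variable {α}

lemma sum_pow_eq_zero_of_odd {N : ℕ}
    (hα : ∀ k < N, Odd k → (univ.val.map α).esymm k = 0) {k : ℕ} (hk : k < N) (hodd : Odd k) :
    ∑ i, α i ^ k = 0 := by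
  induction k using Nat.strong_induction_on with
  | _ k ih =>
    rw [sum_pow_eq_mul_esymm_sub_sum α hodd.pos, hα k hk hodd, mul_zero, zero_sub, neg_eq_zero]
    refine sum_eq_zero fun p hp ↦ ?_
    obtain ⟨hsum, hpos, hlt⟩ : p.1 + p.2 = k ∧ 0 < p.1 ∧ p.1 < k := by simpa using hp
    rcases Nat.even_or_odd p.1 with heven | hodd₁
    · have hodd₂ : Odd p.2 := by grind
      rw [ih p.2 (by lia) (by lia) hodd₂, mul_zero]
    · rw [hα p.1 (by lia) hodd₁, mul_zero, zero_mul]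

lemma two_dvd_sum_pow_two_mul {N : ℕ} (hα : ∀ k < N, Odd k → ∑ i, α i ^ k = 0) {k : ℕ}
    (hk : k < N) (hpos : 0 < k) : 2 ∣ ∑ i, α i ^ (2 * k) := by
  induction k using Nat.strong_induction_on with
  | _ k ih =>
    have hhalf : 2 ∣ ∑ i, α i ^ k := by
      rcases Nat.even_or_odd' k with ⟨j, rfl | rfl⟩
      · exact ih j (by lia) (by lia) (by lia)
      · rw [hα _ hk (odd_two_mul_add_one j)]
        exact dvd_zero 2
    have hsq : ∑ i, α i ^ (2 * k) =
        (∑ i, α i ^ k) ^ 2 - 2 * (univ.val.map (α · ^ k)).esymm 2 := by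
      rw [two_mul_esymm_two]
      simp only [pow_mul', sub_sub_cancel]
    exact hsq ▸ dvd_sub (dvd_pow hhalf two_ne_zero) (dvd_mul_right 2 _)

lemma prod_add_mul_eq_sum_esymm (c : ι → R) (a b : R) :
    ∏ i, (a + b * c i) = ∑ j ∈ range (Fintype.card ι + 1),
      b ^ j * (univ.val.map c).esymm j * a ^ (Fintype.card ι - j) := by
  have esymm_scale (j : ℕ) :
      (univ.val.map fun i ↦ b * c i).esymm j = b ^ j * (univ.val.map c).esymm j := by
    simpa only [Multiset.map_map, Function.comp_def, smul_eq_mul] using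
      (Multiset.pow_smul_esymm b j (univ.val.map c)).symm
  have vieta := congrArg (eval a)
    (Multiset.prod_X_add_C_eq_sum_esymm (univ.val.map fun i ↦ b * c i))
  simp only [Multiset.map_map, Multiset.card_map, eval_multiset_prod, eval_finsetSum,
    Function.comp_def, eval_add, eval_mul, eval_pow, eval_X, eval_C, esymm_scale] at vieta
  exact vieta

lemma eight_dvd_prod_add_two_mul_sub_pow {c : ι → R} (a : R) (hsum : ∑ i, c i = 0)
    (hsq : 4 ∣ ∑ i, c i ^ 2) : 8 ∣ ∏ i, (a + 2 * c i) - a ^ Fintype.card ι := by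
  have four_dvd : 4 ∣ 2 * (univ.val.map c).esymm 2 := by
    rw [two_mul_esymm_two, hsum, zero_pow two_ne_zero, zero_sub]
    exact hsq.neg_right
  rw [prod_add_mul_eq_sum_esymm, sum_range_succ', pow_zero, Nat.sub_zero]
  have esymm_zero : (univ.val.map c).esymm 0 = 1 := by simp [esymm_map_val]
  rw [esymm_zero, one_mul, one_mul, add_sub_cancel_right]
  refine dvd_sum fun j _ ↦ Dvd.dvd.mul_right ?_ _
  match j with
  | 0 => simp [esymm_one_map, hsum]
  | 1 => convert! mul_dvd_mul_left 2 four_dvd using 1 <;> ring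
  | j + 2 => exact Dvd.dvd.mul_right ⟨2 ^ j, by ring⟩ _

end PowerSums

section ModEight

lemma pow_self_modEq_of_odd {n : ℕ} (hn : Odd n) : (n : ℤ) ^ n ≡ n [ZMOD 8] := by
  have hsq : (n : ℤ) ^ 2 ≡ 1 [ZMOD 8] :=
    (Int.modEq_iff_dvd.mpr (Int.eight_dvd_sq_sub_one_of_odd (mod_cast hn))).symm
  obtain ⟨k, hk⟩ := hn
  calc (n : ℤ) ^ n = ((n : ℤ) ^ 2) ^ k * n := by rw [← pow_mul, ← pow_succ, ← hk]
    _ ≡ 1 ^ k * n [ZMOD 8] := (hsq.pow k).mul_right _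
    _ = n := by rw [one_pow, one_mul]

lemma neg_one_pow_mul_pred_div_two {R : Type*} [Monoid R] [HasDistribNeg R] {n : ℕ} (hn : Odd n) :
    (-1 : R) ^ (n * (n - 1) / 2) = (-1) ^ (n / 2) := by
  obtain ⟨k, rfl⟩ := hn
  have exponent : (2 * k + 1) * (2 * k + 1 - 1) / 2 = 2 * k * k + k :=
    Nat.div_eq_of_eq_mul_left two_pos (by rw [Nat.add_sub_cancel]; ring)
  have half : (2 * k + 1) / 2 = k := by lia
  rw [exponent, half, pow_add, mul_assoc, pow_mul, neg_one_sq, one_pow, one_mul]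

lemma neg_one_pow_mul_self_modEq_one {n : ℕ} (hn : n % 8 = 1 ∨ n % 8 = 7) :
    (-1 : ℤ) ^ (n * (n - 1) / 2) * n ≡ 1 [ZMOD 8] := by
  rw [neg_one_pow_mul_pred_div_two (by grind), Int.ModEq]
  rcases hn with h | h
  · rw [Even.neg_one_pow (by grind)]; lia
  · rw [Odd.neg_one_pow (by grind)]; lia

lemma neg_one_pow_mul_self_modEq_five {n : ℕ} (hn : n % 8 = 3 ∨ n % 8 = 5) :
    (-1 : ℤ) ^ (n * (n - 1) / 2) * n ≡ 5 [ZMOD 8] := by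
  rw [neg_one_pow_mul_pred_div_two (by grind), Int.ModEq]
  rcases hn with h | h
  · rw [Odd.neg_one_pow (by grind)]; lia
  · rw [Even.neg_one_pow (by grind)]; lia

end ModEight

section Pentanomial

variable (R : Type*) [CommRing R] (s a : ℕ)

/-- The polynomial `F` of degree `n = a + 3 * s`, parametrised by its lowest positive exponent
`a = n - 3 * s` so that no truncated subtraction occurs. -/
noncomputable def pentanomial : R[X] :=
  X ^ (a + 3 * s) + X ^ (a + 2 * s) + X ^ (a + s) + X ^ a + 1

lemma map_pentanomial {R S : Type*} [CommRing R] [CommRing S] (φ : R →+* S) (s a : ℕ) :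
    (pentanomial R s a).map φ = pentanomial S s a := by
  simp [pentanomial]

variable {R s a}

lemma natDegree_pentanomial_le : (pentanomial R s a).natDegree ≤ a + 3 * s := by
  unfold pentanomial
  compute_degree
  lia

lemma coeff_pentanomial_add_three_mul (hs : 0 < s) :
    (pentanomial R s a).coeff (a + 3 * s) = 1 := by
  simp [pentanomial, coeff_X_pow, coeff_one, hs.ne']

lemma monic_pentanomial (hs : 0 < s) : (pentanomial R s a).Monic :=
  monic_of_natDegree_le_of_coeff_eq_one _ natDegree_pentanomial_le
    (coeff_pentanomial_add_three_mul hs)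

lemma natDegree_pentanomial [Nontrivial R] (hs : 0 < s) :
    (pentanomial R s a).natDegree = a + 3 * s :=
  natDegree_eq_of_le_of_coeff_ne_zero natDegree_pentanomial_le
    (coeff_pentanomial_add_three_mul (R := R) hs ▸ one_ne_zero)

lemma coeff_pentanomial_of_even (hs : Even s) (ha : Odd a) {k : ℕ} (hk : Even k) (hpos : 0 < k) :
    (pentanomial R s a).coeff k = 0 := by
  have : k ≠ a + 3 * s ∧ k ≠ a + 2 * s ∧ k ≠ a + s ∧ k ≠ a := by grind
  simp [pentanomial, coeff_X_pow, coeff_one, this, hpos.ne']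

/-- The polynomial function `B` with `x F'(x) = n F(x) - (n + s B(x))` for the pentanomial `F` of
degree `n`; up to the factor `s` and the constant `n`, it is the defect in Euler's identity
`x F'(x) = n F(x)` for homogeneous `F`. -/
def eulerDefect (s a : ℕ) (x : R) : R := x ^ (a + 2 * s) + 2 * x ^ (a + s) + 3 * x ^ a

lemma mul_eval_derivative_pentanomial {x : R} (hx : (pentanomial R s a).eval x = 0) :
    x * (derivative (pentanomial R s a)).eval x =
      -((a + 3 * s : ℕ) + s * eulerDefect s a x) := by
  have euler (m : ℕ) : x * (m * x ^ (m - 1)) = m * x ^ m := by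
    cases m with
    | zero => simp
    | succ m => rw [Nat.add_sub_cancel]; ring
  simp only [pentanomial, eval_add, eval_pow, eval_X, eval_one] at hx
  simp only [pentanomial, derivative_add, derivative_X_pow, derivative_one, eval_add, eval_mul,
    eval_C, eval_pow, eval_X, mul_add, euler, eval_zero, eulerDefect]
  push_cast
  linear_combination (a + 3 * s : R) * hx

variable {ι : Type*} [Fintype ι] {α : ι → R}
  (hα : pentanomial R s a = ∏ i, (X - C (α i)))
include hα

lemma eval_pentanomial_root (i : ι) : (pentanomial R s a).eval (α i) = 0 := by
  rw [hα, eval_prod]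
  exact prod_eq_zero (mem_univ i) (by simp)

lemma card_roots_pentanomial [Nontrivial R] (hs : 0 < s) : Fintype.card ι = a + 3 * s := by
  rw [← natDegree_pentanomial (R := R) hs, hα, natDegree_finsetProd_X_sub_C_eq_card, card_univ]

lemma sum_pow_roots_pentanomial [Nontrivial R] (hs : Even s) (hpos : 0 < s) (ha : Odd a) {k : ℕ}
    (hk : k < a + 3 * s) (hodd : Odd k) : ∑ i, α i ^ k = 0 := by
  have hcard := card_roots_pentanomial hα hpos
  refine sum_pow_eq_zero_of_odd (N := a + 3 * s) (fun j hj hjodd ↦ ?_) hk hodd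
  have vieta := (univ.val.map α).prod_X_sub_C_coeff (k := a + 3 * s - j) (by simp [hcard])
  rw [Multiset.map_map, Multiset.card_map] at vieta
  change (∏ i, (X - C (α i))).coeff _ = _ at vieta
  rw [← hα, coeff_pentanomial_of_even hs ha (by grind) (by lia)] at vieta
  simpa [hcard, Nat.sub_sub_self hj.le, hjodd.neg_one_pow] using vieta.symm

lemma sum_eulerDefect [Nontrivial R] (hs : Even s) (hpos : 0 < s) (ha : Odd a) :
    ∑ i, eulerDefect s a (α i) = 0 := by
  have hodd {k : ℕ} := sum_pow_roots_pentanomial hα hs hpos ha (k := k)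
  simp only [eulerDefect, sum_add_distrib, ← mul_sum]
  rw [hodd (by lia) (by grind), hodd (by lia) (by grind), hodd (by lia) ha]
  ring

lemma sum_pow_add_eq_neg_sum_pow (k : ℕ) :
    ∑ i, α i ^ (k + a + 3 * s) + ∑ i, α i ^ (k + a + 2 * s) + ∑ i, α i ^ (k + a + s) +
      ∑ i, α i ^ (k + a) = -∑ i, α i ^ k := by
  simp only [← sum_add_distrib, ← sum_neg_distrib]
  refine sum_congr rfl fun i _ ↦ ?_
  have hroot := eval_pentanomial_root hα i
  simp only [pentanomial, eval_add, eval_pow, eval_X, eval_one] at hroot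
  linear_combination α i ^ k * hroot

lemma four_dvd_sum_eulerDefect_sq [Nontrivial R] (hs : Even s) (hpos : 0 < s) (ha : Odd a) :
    4 ∣ ∑ i, eulerDefect s a (α i) ^ 2 := by
  have hodd {k : ℕ} := sum_pow_roots_pentanomial hα hs hpos ha (k := k)
  have heven (k : ℕ) := two_dvd_sum_pow_two_mul (fun _ hk hkodd ↦ hodd hk hkodd) (k := k)
  have ha0 := ha.pos
  have recurrence {k : ℕ} (hk : k < a + 3 * s) (hkodd : Odd k) :=
    (sum_pow_add_eq_neg_sum_pow hα k).trans (by rw [hodd hk hkodd, neg_zero])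
  obtain ⟨t, rfl⟩ := hs.two_dvd
  obtain ⟨q₀, h₀⟩ := heven a (by lia) (by lia)
  obtain ⟨q₁, h₁⟩ := heven (a + t) (by lia) (by lia)
  obtain ⟨q₂, h₂⟩ := heven (a + 2 * t) (by lia) (by lia)
  obtain ⟨q₃, h₃⟩ := heven (a + 3 * t) (by lia) (by lia)
  have rel₀ : ∑ i, α i ^ (2 * (a + 3 * t)) + ∑ i, α i ^ (2 * (a + 2 * t)) +
      ∑ i, α i ^ (2 * (a + t)) + ∑ i, α i ^ (2 * a) = 0 := by
    convert recurrence (k := a) (by lia) ha using 6 <;> ring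
  have rel₁ : ∑ i, α i ^ (2 * (a + 4 * t)) + ∑ i, α i ^ (2 * (a + 3 * t)) +
      ∑ i, α i ^ (2 * (a + 2 * t)) + ∑ i, α i ^ (2 * (a + t)) = 0 := by
    convert recurrence (k := a + 2 * t) (by lia) (ha.add_even hs) using 6 <;> ring
  have top : ∑ i, α i ^ (2 * (a + 4 * t)) = ∑ i, α i ^ (2 * a) := by
    linear_combination rel₁ - rel₀
  have expand : ∑ i, eulerDefect (2 * t) a (α i) ^ 2 =
      ∑ i, α i ^ (2 * (a + 4 * t)) + 4 * ∑ i, α i ^ (2 * (a + 3 * t)) +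
        10 * ∑ i, α i ^ (2 * (a + 2 * t)) + 12 * ∑ i, α i ^ (2 * (a + t)) +
        9 * ∑ i, α i ^ (2 * a) := by
    simp only [eulerDefect, mul_sum, ← sum_add_distrib]
    exact sum_congr rfl fun i _ ↦ by ring
  refine ⟨2 * q₃ + 5 * q₂ + 6 * q₁ + 5 * q₀, ?_⟩
  linear_combination expand + top + 4 * h₃ + 10 * h₂ + 12 * h₁ + 10 * h₀

lemma prod_roots_pentanomial [Nontrivial R] (hpos : 0 < s) (ha : 0 < a) (hn : Odd (a + 3 * s)) :
    ∏ i, α i = -1 := by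
  have hcoeff := congrArg (eval 0) hα
  simp only [pentanomial, eval_add, eval_pow, eval_X, eval_one, eval_prod, eval_sub, eval_C,
    zero_sub, prod_neg, card_univ, card_roots_pentanomial hα hpos, hn.neg_one_pow] at hcoeff
  rw [zero_pow (by lia), zero_pow (by lia), zero_pow (by lia), zero_pow (by lia)] at hcoeff
  linear_combination hcoeff

lemma prod_eval_derivative_pentanomial [Nontrivial R] (hpos : 0 < s) (ha : 0 < a)
    (hn : Odd (a + 3 * s)) :
    ∏ i, (derivative (pentanomial R s a)).eval (α i) =
      ∏ i, ((a + 3 * s : ℕ) + s * eulerDefect s a (α i)) := by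
  have heuler := prod_congr (M := R) rfl fun i (_ : i ∈ univ) ↦
    mul_eval_derivative_pentanomial (eval_pentanomial_root hα i)
  rw [prod_mul_distrib, prod_roots_pentanomial hα hpos ha hn, prod_neg, card_univ,
    card_roots_pentanomial hα hpos, hn.neg_one_pow] at heuler
  linear_combination -heuler

lemma eight_dvd_prod_eval_derivative_pentanomial_sub [Nontrivial R] (hs : Even s)
    (hpos : 0 < s) (ha : Odd a) :
    8 ∣ ∏ i, (derivative (pentanomial R s a)).eval (α i) -
      ((a + 3 * s : ℕ) : R) ^ (a + 3 * s) := by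
  rw [prod_eval_derivative_pentanomial hα hpos ha.pos (by grind)]
  obtain ⟨t, rfl⟩ := hs.two_dvd
  have hsum : ∑ i, t * eulerDefect (2 * t) a (α i) = 0 := by
    rw [← mul_sum, sum_eulerDefect hα hs hpos ha, mul_zero]
  have hsq : 4 ∣ ∑ i, (t * eulerDefect (2 * t) a (α i)) ^ 2 := by
    simp only [mul_pow, ← mul_sum]
    exact (four_dvd_sum_eulerDefect_sq hα hs hpos ha).mul_left _
  simpa [card_roots_pentanomial hα hpos, mul_assoc] using
    eight_dvd_prod_add_two_mul_sub_pow ((a + 3 * (2 * t) : ℕ) : R) hsum hsq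

end Pentanomial

lemma discr_pentanomial_eq_prod {S ι : Type*} [CommRing S] [Nontrivial S] [Fintype ι] {s a : ℕ}
    (hs : 0 < s) {α : ι → S} (hα : pentanomial S s a = ∏ i, (X - C (α i))) :
    ((pentanomial ℤ s a).discr : S) = (-1) ^ ((a + 3 * s) * (a + 3 * s - 1) / 2) *
      ∏ i, (derivative (pentanomial S s a)).eval (α i) := by
  have hcard := card_roots_pentanomial hα hs
  have hmap := discr_map_of_monic (monic_pentanomial (R := ℤ) (a := a) hs) (Int.castRingHom S)
  rw [map_pentanomial, hα, discr_prod_X_sub_C, hcard, ← hα] at hmap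
  exact hmap.symm

lemma discr_pentanomial_modEq {s a : ℕ} (hs : Even s) (hpos : 0 < s) (ha : Odd a) :
    (pentanomial ℤ s a).discr ≡
      (-1) ^ ((a + 3 * s) * (a + 3 * s - 1) / 2) * ((a + 3 * s : ℕ) : ℤ) [ZMOD 8] := by
  have hn : Odd (a + 3 * s) := by grind
  obtain ⟨S, _, _, _, _, ι, _, α, hα⟩ :=
    exists_free_map_eq_prod_X_sub_C (monic_pentanomial (R := ℤ) (a := a) hpos)
  rw [map_pentanomial] at hα
  refine Int.ModEq.trans ?_ ((pow_self_modEq_of_odd hn).mul_left _)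
  refine (Int.modEq_iff_dvd.mpr (dvd_of_algebraMap_dvd_algebraMap (S := S) ?_)).symm
  rw [eq_intCast, eq_intCast, Int.cast_sub, discr_pentanomial_eq_prod hpos hα]
  simpa [mul_sub] using (eight_dvd_prod_eval_derivative_pentanomial_sub hα hs hpos ha).mul_left
    ((-1) ^ ((a + 3 * s) * (a + 3 * s - 1) / 2))

theorem discriminant_mod_eight_general {R : Type*} [CommRing R] [Nontrivial R] (s n : ℕ)
    (hs : Even s) (hs0 : 0 < s) (hodd : Odd n) (hn : 3 * s < n) (α : Fin n → R)
    (hroots : (X ^ n + X ^ (n - s) + X ^ (n - 2 * s) + X ^ (n - 3 * s) + 1 : ℤ[X]).map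
      (Int.castRingHom R) = ∏ i, (X - C (α i))) :
    let D := (X ^ n + X ^ (n - s) + X ^ (n - 2 * s) + X ^ (n - 3 * s) + 1 : ℤ[X]).discr
    (D : R) = ∏ i, ∏ j ∈ Ioi i, (α i - α j) ^ 2 ∧
      D ≡ (-1) ^ (n * (n - 1) / 2) * (n : ℤ) [ZMOD 8] ∧
      (n % 8 = 1 ∨ n % 8 = 7 → D ≡ 1 [ZMOD 8]) ∧
      (n % 8 = 3 ∨ n % 8 = 5 → D ≡ 5 [ZMOD 8]) := by
  intro D
  obtain ⟨a, rfl⟩ := Nat.exists_eq_add_of_le' hn.le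
  have hF : (X ^ (a + 3 * s) + X ^ (a + 3 * s - s) + X ^ (a + 3 * s - 2 * s) +
      X ^ (a + 3 * s - 3 * s) + 1 : ℤ[X]) = pentanomial ℤ s a := by
    rw [pentanomial]
    congr 5 <;> lia
  have hD : D = (pentanomial ℤ s a).discr := congrArg discr hF
  rw [hF, map_pentanomial] at hroots
  have hmod : D ≡ _ [ZMOD 8] := hD ▸ discr_pentanomial_modEq hs hs0 (by grind)
  refine ⟨?_, hmod, fun h ↦ hmod.trans (neg_one_pow_mul_self_modEq_one h),
    fun h ↦ hmod.trans (neg_one_pow_mul_self_modEq_five h)⟩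
  rw [hD, discr_pentanomial_eq_prod hs0 hroots, prod_prod_Ioi_sub_sq, hroots]

theorem discriminant_mod_eight (s n : ℕ) (hs : Even s) (hs0 : 0 < s)
    (hodd : Odd n) (hn : 3 * s < n) (α : Fin n → ℂ)
    (hroots : (X ^ n + X ^ (n - s) + X ^ (n - 2 * s) + X ^ (n - 3 * s) + 1 :
        Polynomial ℤ).map (Int.castRingHom ℂ) =
      ∏ i : Fin n, (X - C (α i))) :
    ∃ D : ℤ,
      (D : ℂ) = ∏ i : Fin n, ∏ j ∈ Finset.Ioi i, (α i - α j) ^ 2 ∧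
      D ≡ (-1) ^ (n * (n - 1) / 2) * (n : ℤ) [ZMOD 8] ∧
      ((n % 8 = 1 ∨ n % 8 = 7) → D ≡ 1 [ZMOD 8]) ∧
      ((n % 8 = 3 ∨ n % 8 = 5) → D ≡ 5 [ZMOD 8]) :=
  ⟨_, discriminant_mod_eight_general s n hs hs0 hodd hn α hroots⟩
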